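/- Finite double shuffle relations for non-strict multiple zeta values: for all w1, w2 ∈ H^0 one has Z̄(w1 *̄ w2 − w1 ш̄ w2) = 0. -/

import Mathlib

open scoped BigOperators

/-- The two-letter alphabet {x, y}. -/
inductive Letter : Type
  | x : Letter
  | y : Letter
deriving DecidableEq

/-- `H = ℚ⟨x,y⟩`, the noncommutative polynomial ring over ℚ in two
indeterminates, realized as the monoid algebra of the free monoid on `{x,y}`. -/
abbrev H : Type := MonoidAlgebra ℚ (FreeMonoid Letter)

namespace H

/-- The monomial (word) of `H` corresponding to an element of the free monoid. -/
noncomputable def word (w : FreeMonoid Letter) : H := MonoidAlgebra.single w 1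

/-- The generator `x`. -/
noncomputable def X : H := word (FreeMonoid.of Letter.x)

/-- The generator `y`. -/
noncomputable def Y : H := word (FreeMonoid.of Letter.y)

/-- The word `z_k = x^{k-1} y` (for `k ≥ 1`). -/
def zW (k : ℕ) : FreeMonoid Letter :=
  FreeMonoid.ofList (List.replicate (k - 1) Letter.x ++ [Letter.y])

/-- `z_k = x^{k-1} y` as an element of `H`. -/
noncomputable def z (k : ℕ) : H := word (zW k)

/-- A list `[k₁,…,kₙ]` gives the word `z_{k₁} z_{k₂} ⋯ z_{kₙ}`. -/
def zListW (ks : List ℕ) : FreeMonoid Letter :=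
  FreeMonoid.ofList (ks.flatMap fun k => List.replicate (k - 1) Letter.x ++ [Letter.y])

/-- `H¹ = ℚ + Hy` as a ℚ-submodule of `H`. -/
noncomputable def H1 : Submodule ℚ H :=
  LinearMap.range (LinearMap.mulRight ℚ Y) ⊔ Submodule.span ℚ {1}

/-- `H⁰ = ℚ + xHy` as a ℚ-submodule of `H`. -/
noncomputable def H0 : Submodule ℚ H :=
  LinearMap.range ((LinearMap.mulRight ℚ Y).comp (LinearMap.mulLeft ℚ X)) ⊔
    Submodule.span ℚ {1}

/-- Parse a word of `H¹` into the exponent list of its `z`-decomposition: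
`z_{k₁}⋯z_{kₙ} ↦ [k₁,…,kₙ]` (auxiliary accumulator version). -/
def toZAux : List Letter → ℕ → List ℕ
  | [], _ => []
  | Letter.x :: r, n => toZAux r (n + 1)
  | Letter.y :: r, n => (n + 1) :: toZAux r 0

/-- The `z`-decomposition of a word of `H¹`. -/
def toZ (w : FreeMonoid Letter) : List ℕ := toZAux (FreeMonoid.toList w) 0

/-- The harmonic product on words of `H¹` (via `z`-decompositions):
`1 * w = w * 1 = w` and
`z_k w₁ * z_l w₂ = z_k (w₁ * z_l w₂) + z_l (z_k w₁ * w₂) + z_{k+l} (w₁ * w₂)`. -/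
noncomputable def harmW : List ℕ → List ℕ → H
  | [], w => word (zListW w)
  | k :: w1, [] => word (zListW (k :: w1))
  | k :: w1, l :: w2 =>
      z k * harmW w1 (l :: w2) + z l * harmW (k :: w1) w2 + z (k + l) * harmW w1 w2
termination_by w1 w2 => w1.length + w2.length
decreasing_by all_goals simp [Nat.lt_succ_iff] <;> omega

/-- The n-harmonic product on words of `H¹`:
`1 *̄ w = w *̄ 1 = w` and
`z_k w₁ *̄ z_l w₂ = z_k (w₁ *̄ z_l w₂) + z_l (z_k w₁ *̄ w₂) − z_{k+l} (w₁ *̄ w₂)`. -/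
noncomputable def nharmW : List ℕ → List ℕ → H
  | [], w => word (zListW w)
  | k :: w1, [] => word (zListW (k :: w1))
  | k :: w1, l :: w2 =>
      z k * nharmW w1 (l :: w2) + z l * nharmW (k :: w1) w2 - z (k + l) * nharmW w1 w2
termination_by w1 w2 => w1.length + w2.length
decreasing_by all_goals simp [Nat.lt_succ_iff] <;> omega

/-- The harmonic product `*` on `H¹`, extended ℚ-bilinearly. -/
noncomputable def harm (a b : H) : H :=
  Finsupp.sum a.coeff fun w1 c1 =>
    Finsupp.sum b.coeff fun w2 c2 => (c1 * c2) • harmW (toZ w1) (toZ w2)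

/-- The n-harmonic product `*̄` on `H¹`, extended ℚ-bilinearly. -/
noncomputable def nharm (a b : H) : H :=
  Finsupp.sum a.coeff fun w1 c1 =>
    Finsupp.sum b.coeff fun w2 c2 => (c1 * c2) • nharmW (toZ w1) (toZ w2)

/-- The letter exchange `τ(x) = y`, `τ(y) = x`. -/
def τ : Letter → Letter
  | Letter.x => Letter.y
  | Letter.y => Letter.x

/-- `δ(w) = 1` if `w` is the empty word, `0` otherwise. -/
def δ : List Letter → ℚ
  | [] => 1
  | _ :: _ => 0

/-- The shuffle product on words:
`1 ш w = w ш 1 = w` and `u₁w₁ ш u₂w₂ = u₁(w₁ ш u₂w₂) + u₂(u₁w₁ ш w₂)`. -/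
noncomputable def shW : List Letter → List Letter → H
  | [], w => word (FreeMonoid.ofList w)
  | u :: w, [] => word (FreeMonoid.ofList (u :: w))
  | u1 :: w1, u2 :: w2 =>
      word (FreeMonoid.of u1) * shW w1 (u2 :: w2) +
        word (FreeMonoid.of u2) * shW (u1 :: w1) w2
termination_by w1 w2 => w1.length + w2.length
decreasing_by all_goals simp [Nat.lt_succ_iff]

/-- The n-shuffle product on words: `1 ш̄ w = w ш̄ 1 = w` and
`u₁w₁ ш̄ u₂w₂ = u₁(w₁ ш̄ u₂w₂) + u₂(u₁w₁ ш̄ w₂) − δ(w₁)τ(u₁)u₂w₂ − δ(w₂)τ(u₂)u₁w₁`. -/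
noncomputable def nshW : List Letter → List Letter → H
  | [], w => word (FreeMonoid.ofList w)
  | u :: w, [] => word (FreeMonoid.ofList (u :: w))
  | u1 :: w1, u2 :: w2 =>
      word (FreeMonoid.of u1) * nshW w1 (u2 :: w2) +
        word (FreeMonoid.of u2) * nshW (u1 :: w1) w2 -
        δ w1 • word (FreeMonoid.ofList (τ u1 :: u2 :: w2)) -
        δ w2 • word (FreeMonoid.ofList (τ u2 :: u1 :: w1))
termination_by w1 w2 => w1.length + w2.length
decreasing_by all_goals simp [Nat.lt_succ_iff]

/-- The shuffle product `ш` on `H`, extended ℚ-bilinearly. -/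
noncomputable def sh (a b : H) : H :=
  Finsupp.sum a.coeff fun w1 c1 =>
    Finsupp.sum b.coeff fun w2 c2 =>
      (c1 * c2) • shW (FreeMonoid.toList w1) (FreeMonoid.toList w2)

/-- The n-shuffle product `ш̄` on `H`, extended ℚ-bilinearly. -/
noncomputable def nsh (a b : H) : H :=
  Finsupp.sum a.coeff fun w1 c1 =>
    Finsupp.sum b.coeff fun w2 c2 =>
      (c1 * c2) • nshW (FreeMonoid.toList w1) (FreeMonoid.toList w2)

/-- `S₁`: the ℚ-algebra endomorphism of `H` with `S₁(x) = x`, `S₁(y) = x + y`. -/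
noncomputable def S1 : H →ₐ[ℚ] H :=
  MonoidAlgebra.lift ℚ H (FreeMonoid Letter)
    (FreeMonoid.lift fun u => match u with
      | Letter.x => X
      | Letter.y => X + Y)

/-- `S₂`: the ℚ-algebra endomorphism of `H` with `S₂(x) = x`, `S₂(y) = y − x`. -/
noncomputable def S2 : H →ₐ[ℚ] H :=
  MonoidAlgebra.lift ℚ H (FreeMonoid Letter)
    (FreeMonoid.lift fun u => match u with
      | Letter.x => X
      | Letter.y => Y - X)

/-- `S` on a word: `S(1) = 1` and `S(Fy) = S₁(F)y`. -/
noncomputable def SW (w : FreeMonoid Letter) : H :=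
  match (FreeMonoid.toList w).getLast? with
  | some Letter.y =>
      S1 (word (FreeMonoid.ofList (FreeMonoid.toList w).dropLast)) * Y
  | _ => word w

/-- The ℚ-linear map `S : H¹ → H¹` with `S(1) = 1`, `S(Fy) = S₁(F)y`. -/
noncomputable def S (a : H) : H := Finsupp.sum a.coeff fun w c => c • SW w

/-- `S̃` on a word: `S̃(1) = 1` and `S̃(Fy) = S₂(F)y`. -/
noncomputable def StW (w : FreeMonoid Letter) : H :=
  match (FreeMonoid.toList w).getLast? with
  | some Letter.y =>
      S2 (word (FreeMonoid.ofList (FreeMonoid.toList w).dropLast)) * Y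
  | _ => word w

/-- The ℚ-linear map `S̃ : H¹ → H¹` with `S̃(1) = 1`, `S̃(Fy) = S₂(F)y`. -/
noncomputable def St (a : H) : H := Finsupp.sum a.coeff fun w c => c • StW w

/-- The multiple zeta value `ζ(k₁,…,kₙ)`: the sum over strictly decreasing
tuples `m₁ > m₂ > ⋯ > mₙ > 0` of `1/(m₁^{k₁}⋯mₙ^{kₙ})`. -/
noncomputable def mzeta (ks : List ℕ) : ℝ :=
  ∑' m : {f : Fin ks.length → ℕ // (∀ i, 0 < f i) ∧
      ∀ i j : Fin ks.length, i < j → f j < f i},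
    ∏ i : Fin ks.length, ((m.1 i : ℝ) ^ ks.get i)⁻¹

/-- The non-strict multiple zeta value `ζ̄(k₁,…,kₙ)`: the sum over weakly
decreasing tuples `m₁ ≥ m₂ ≥ ⋯ ≥ mₙ > 0` of `1/(m₁^{k₁}⋯mₙ^{kₙ})`. -/
noncomputable def nmzeta (ks : List ℕ) : ℝ :=
  ∑' m : {f : Fin ks.length → ℕ // (∀ i, 0 < f i) ∧
      ∀ i j : Fin ks.length, i ≤ j → f j ≤ f i},
    ∏ i : Fin ks.length, ((m.1 i : ℝ) ^ ks.get i)⁻¹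

/-- The evaluation map `Z : H⁰ → ℝ`, `Z(1) = 1`,
`Z(z_{k₁}⋯z_{kₙ}) = ζ(k₁,…,kₙ)` (extended ℚ-linearly to `H`). -/
noncomputable def Z (a : H) : ℝ := Finsupp.sum a.coeff fun w c => (c : ℝ) * mzeta (toZ w)

/-- The n-evaluation map `Z̄ : H⁰ → ℝ`, `Z̄(1) = 1`,
`Z̄(z_{k₁}⋯z_{kₙ}) = ζ̄(k₁,…,kₙ)` (extended ℚ-linearly to `H`). -/
noncomputable def Zbar (a : H) : ℝ := Finsupp.sum a.coeff fun w c => (c : ℝ) * nmzeta (toZ w)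

/-- `i`-fold n-harmonic power: `a^{*̄ 0} = 1`, `a^{*̄ (i+1)} = a *̄ a^{*̄ i}`. -/
noncomputable def nharmPow : ℕ → H → H
  | 0, _ => 1
  | i + 1, a => nharm a (nharmPow i a)

/-- `i`-fold n-shuffle power: `a^{ш̄ 0} = 1`, `a^{ш̄ (i+1)} = a ш̄ a^{ш̄ i}`. -/
noncomputable def nshPow : ℕ → H → H
  | 0, _ => 1
  | i + 1, a => nsh a (nshPow i a)

end H

open H

/-!
`Z̄` is multiplicative on `H⁰` for each of the two products. Attach to a word `w = z_{k₁} ⋯ z_{kₙ}`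
the power series `L_w(t) = ∑ t^{m₁} / (m₁^{k₁} ⋯ mₙ^{kₙ})` over `m₁ ≥ ⋯ ≥ mₙ > 0`. Prepending a
letter `u` integrates: `t (d/dt) L_{uw} = g_u L_w - L_w(0)` with `g_x = 1` and `g_y = 1/(1-t)`, so
integration by parts turns the n-shuffle product into the product of power series; the subtracted
constants account for the correction terms with `δ` and `τ`. On the other hand, the sum of the
coefficients of `L_w` up to degree `N` is the truncation of `ζ̄(k₁,…,kₙ)` to `m₁ ≤ N`, and splitting
a product of two such sums according to the larger of the two outer indices gives the n-harmonic
product. For words of `H⁰` the coefficients are `O((log m)^r / m²)`, so both identities pass to the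
limit `Z̄(w) = L_w(1)`.
-/

open Filter Topology
open scoped PowerSeries

/-! ### Sums of coefficients of power series -/

section PowerSeriesLemmas

variable {R : Type*} [CommRing R]

/-- The Euler operator `t d/dt` on formal power series in `t`. -/
noncomputable def eulerDerivation (R : Type*) [CommRing R] : Derivation R R⟦X⟧ R⟦X⟧ :=
  (PowerSeries.X : R⟦X⟧) • PowerSeries.derivative R

theorem coeff_eulerDerivation (f : R⟦X⟧) (n : ℕ) :
    PowerSeries.coeff n (eulerDerivation R f) = n * PowerSeries.coeff n f := by
  rw [eulerDerivation, Derivation.smul_apply, smul_eq_mul]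
  cases n with
  | zero => simp
  | succ n => rw [PowerSeries.coeff_succ_X_mul, PowerSeries.coeff_derivative]; push_cast; ring

theorem eulerDerivation_ext [IsAddTorsionFree R] {f g : R⟦X⟧}
    (hderiv : eulerDerivation R f = eulerDerivation R g)
    (hconst : PowerSeries.constantCoeff f = PowerSeries.constantCoeff g) : f = g :=
  PowerSeries.derivative.ext (PowerSeries.X_mul_cancel hderiv) hconst

/-- The sum of the coefficients of `f` of degree at most `N`. -/
noncomputable def coeffSum (f : R⟦X⟧) (N : ℕ) : R :=
  ∑ j ∈ Finset.range (N + 1), PowerSeries.coeff j f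

theorem coeffSum_one (N : ℕ) : coeffSum (1 : R⟦X⟧) N = 1 := by
  simp [coeffSum, PowerSeries.coeff_one]

theorem coeff_mk_one_mul (f : R⟦X⟧) (N : ℕ) :
    PowerSeries.coeff N (PowerSeries.mk 1 * f) = coeffSum f N := by
  rw [mul_comm, PowerSeries.coeff_mul, Finset.Nat.sum_antidiagonal_eq_sum_range_succ_mk]
  simp [coeffSum]

theorem coeffSum_mul_coeffSum (f g : R⟦X⟧) (N : ℕ) :
    coeffSum f N * coeffSum g N =
      ∑ m ∈ Finset.range (N + 1), (PowerSeries.coeff m f * coeffSum g m +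
        coeffSum f m * PowerSeries.coeff m g - PowerSeries.coeff m f * PowerSeries.coeff m g) := by
  induction N with
  | zero => simp [coeffSum]
  | succ N ih =>
    rw [Finset.sum_range_succ, ← ih]
    simp only [coeffSum, Finset.sum_range_succ _ (N + 1)]
    ring

section Ordered

variable [PartialOrder R] [IsOrderedAddMonoid R] {f : R⟦X⟧}

theorem coeffSum_nonneg (hf : ∀ m, 0 ≤ PowerSeries.coeff m f) (N : ℕ) : 0 ≤ coeffSum f N :=
  Finset.sum_nonneg fun m _ => hf m

theorem coeffSum_monotone (hf : ∀ m, 0 ≤ PowerSeries.coeff m f) : Monotone (coeffSum f) :=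
  fun _ _ hMN => Finset.sum_le_sum_of_subset_of_nonneg
    (Finset.range_subset_range.2 (Nat.succ_le_succ hMN)) fun m _ _ => hf m

theorem coeff_le_coeffSum (hf : ∀ m, 0 ≤ PowerSeries.coeff m f) (N : ℕ) :
    PowerSeries.coeff N f ≤ coeffSum f N :=
  Finset.single_le_sum (fun m _ => hf m) (Finset.self_mem_range_succ N)

end Ordered

theorem tendsto_coeffSum [TopologicalSpace R] {f : R⟦X⟧} {a : R}
    (hf : HasSum (fun m => PowerSeries.coeff m f) a) :
    Tendsto (coeffSum f) atTop (𝓝 a) :=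
  hf.tendsto_sum_nat.comp (tendsto_add_atTop_nat 1)

theorem hasSum_coeff_mul {f g : ℝ⟦X⟧} {a b : ℝ}
    (hf : HasSum (fun m => PowerSeries.coeff m f) a)
    (hg : HasSum (fun m => PowerSeries.coeff m g) b) :
    HasSum (fun m => PowerSeries.coeff m (f * g)) (a * b) := by
  have hf' := hf.summable.norm
  have hg' := hg.summable.norm
  simp only [PowerSeries.coeff_mul]
  rw [← hf.tsum_eq, ← hg.tsum_eq,
    tsum_mul_tsum_eq_tsum_sum_antidiagonal_of_summable_norm hf' hg']
  exact (summable_norm_sum_mul_antidiagonal_of_summable_norm hf' hg').of_norm.hasSum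

end PowerSeriesLemmas

/-! ### Real series and sums over weakly decreasing tuples -/

theorem isBigO_harmonic_log :
    (fun m : ℕ => (harmonic m : ℝ)) =O[atTop] fun m : ℕ => Real.log m := by
  have harmonic_isBigO : (fun m : ℕ => (harmonic m : ℝ)) =O[atTop] fun m : ℕ => 1 + Real.log m := by
    refine Asymptotics.IsBigO.of_norm_le fun m => ?_
    rw [Real.norm_of_nonneg (by rw [harmonic]; positivity)]
    exact harmonic_le_one_add_log m
  refine harmonic_isBigO.trans (Asymptotics.IsBigO.add ?_ (Asymptotics.isBigO_refl _ _))
  exact Real.isLittleO_const_log_atTop.isBigO.comp_tendsto tendsto_natCast_atTop_atTop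

theorem summable_harmonic_pow_div_sq (k : ℕ) :
    Summable fun m : ℕ => (harmonic m : ℝ) ^ k / (m : ℝ) ^ 2 := by
  have log_isBigO : (fun m : ℕ => Real.log m ^ k) =O[atTop] fun m : ℕ => (m : ℝ) ^ (1 / 2 : ℝ) := by
    have h := isLittleO_log_rpow_rpow_atTop (s := 1 / 2) k one_half_pos
    simpa using! h.isBigO.comp_tendsto tendsto_natCast_atTop_atTop
  refine summable_of_isBigO_nat (Real.summable_nat_rpow.2 (by norm_num : (-3 / 2 : ℝ) < -1)) ?_
  refine (((isBigO_harmonic_log.pow k).trans log_isBigO).mul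
    (Asymptotics.isBigO_refl (fun m : ℕ => ((m : ℝ) ^ 2)⁻¹) atTop)).trans_eventuallyEq ?_
  filter_upwards [eventually_gt_atTop 0] with m hm
  rw [← Real.rpow_natCast, ← Real.rpow_neg m.cast_nonneg, ← Real.rpow_add (Nat.cast_pos.2 hm)]
  norm_num

theorem hasSum_of_tendsto_sum_of_monotone {α : Type*} {f : α → ℝ} (hf : ∀ a, 0 ≤ f a)
    {s : ℕ → Finset α} (hs : Monotone s) (mem_s : ∀ a, ∃ N, a ∈ s N) {S : ℝ}
    (hS : Tendsto (fun N => ∑ a ∈ s N, f a) atTop (𝓝 S)) : HasSum f S := by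
  have sum_mono : Monotone fun t : Finset α => ∑ a ∈ t, f a :=
    fun _ _ htu => Finset.sum_le_sum_of_subset_of_nonneg htu fun a _ _ => hf a
  exact (tendsto_iff_tendsto_subseq_of_monotone sum_mono
    (tendsto_atTop_finset_of_monotone hs mem_s)).2 hS

/-- The weakly decreasing `n`-tuples of positive integers whose entries are at most `N`. -/
def antitoneTuples (n N : ℕ) : Finset (Fin n → ℕ) :=
  {f ∈ Fintype.piFinset fun _ => Finset.Icc 1 N | ∀ i j, i ≤ j → f j ≤ f i}

theorem mem_antitoneTuples {n N : ℕ} {f : Fin n → ℕ} :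
    f ∈ antitoneTuples n N ↔
      ((∀ i, 0 < f i) ∧ ∀ i j, i ≤ j → f j ≤ f i) ∧ ∀ i, f i ≤ N := by
  simp only [antitoneTuples, Finset.mem_filter, Fintype.mem_piFinset, Finset.mem_Icc,
    forall_and, Nat.one_le_iff_ne_zero, Nat.pos_iff_ne_zero]
  tauto

theorem cons_mem_antitoneTuples {n N m : ℕ} {g : Fin n → ℕ} :
    Fin.cons m g ∈ antitoneTuples (n + 1) N ↔ m ∈ Finset.Icc 1 N ∧ g ∈ antitoneTuples n m := by
  simp only [mem_antitoneTuples, Fin.forall_fin_succ, Fin.cons_zero, Fin.cons_succ,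
    Finset.mem_Icc, Fin.succ_le_succ_iff]
  grind

theorem sum_antitoneTuples_succ {M : Type*} [AddCommMonoid M] (n N : ℕ)
    (F : (Fin (n + 1) → ℕ) → M) :
    ∑ f ∈ antitoneTuples (n + 1) N, F f =
      ∑ m ∈ Finset.Icc 1 N, ∑ g ∈ antitoneTuples n m, F (Fin.cons m g) := by
  rw [Finset.sum_sigma']
  refine Finset.sum_bij' (fun f _ => ⟨f 0, Fin.tail f⟩) (fun p _ => Fin.cons p.1 p.2)
    (fun f hf => ?_) (fun p hp => ?_) (fun f _ => ?_) (fun p _ => ?_) (fun f _ => ?_)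
  · rw [← Fin.cons_self_tail f, cons_mem_antitoneTuples] at hf
    exact Finset.mem_sigma.2 hf
  · exact cons_mem_antitoneTuples.2 (Finset.mem_sigma.1 hp)
  · exact Fin.cons_self_tail f
  · simp
  · simp

namespace H

/-! ### Multiple polylogarithms and the n-shuffle product -/

/-- The series `g_u` for which `g_u dt/t` is the differential form attached to the letter `u`:
`g_x = 1` and `g_y = 1/(1-t)`. -/
noncomputable def letterSeries : Letter → ℝ⟦X⟧
  | Letter.x => 1
  | Letter.y => PowerSeries.mk 1

/-- The integration operator `f ↦ ∫₀ᵗ (g_u f - f(0)) dt/t` attached to a letter `u`. Division by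
zero removes the constant term, so that subtracting `f(0)` is not needed in the definition. -/
noncomputable def letterIntegral (u : Letter) : ℝ⟦X⟧ →ₗ[ℝ] ℝ⟦X⟧ where
  toFun f := PowerSeries.mk fun m => PowerSeries.coeff m (letterSeries u * f) / m
  map_add' f g := by ext m; simp [mul_add, add_div]
  map_smul' c f := by ext m; simp [mul_div_assoc]

theorem coeff_letterIntegral (u : Letter) (f : ℝ⟦X⟧) (m : ℕ) :
    PowerSeries.coeff m (letterIntegral u f) = PowerSeries.coeff m (letterSeries u * f) / m := by
  simp [letterIntegral]

theorem coeff_letterIntegral_x (f : ℝ⟦X⟧) (m : ℕ) :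
    PowerSeries.coeff m (letterIntegral Letter.x f) = PowerSeries.coeff m f / m := by
  rw [coeff_letterIntegral, letterSeries, one_mul]

theorem coeff_letterIntegral_y (f : ℝ⟦X⟧) (m : ℕ) :
    PowerSeries.coeff m (letterIntegral Letter.y f) = coeffSum f m / m := by
  rw [coeff_letterIntegral, letterSeries, coeff_mk_one_mul]

@[simp]
theorem constantCoeff_letterIntegral (u : Letter) (f : ℝ⟦X⟧) :
    PowerSeries.constantCoeff (letterIntegral u f) = 0 := by
  rw [← PowerSeries.coeff_zero_eq_constantCoeff_apply, coeff_letterIntegral, Nat.cast_zero,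
    div_zero]

theorem eulerDerivation_letterIntegral (u : Letter) (f : ℝ⟦X⟧) :
    eulerDerivation ℝ (letterIntegral u f) =
      letterSeries u * f - PowerSeries.C (PowerSeries.constantCoeff f) := by
  ext m
  rw [coeff_eulerDerivation, coeff_letterIntegral, map_sub, PowerSeries.coeff_C]
  rcases eq_or_ne m 0 with rfl | hm
  · cases u <;> simp [letterSeries]
  · rw [if_neg hm, sub_zero, mul_div_cancel₀ _ (Nat.cast_ne_zero.2 hm)]

/-- Integration by parts. The last two terms come from the subtracted constants `f(0)`, `g(0)`. -/
theorem letterIntegral_mul_letterIntegral (u v : Letter) (f g : ℝ⟦X⟧) :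
    letterIntegral u f * letterIntegral v g =
      letterIntegral u (f * letterIntegral v g) + letterIntegral v (letterIntegral u f * g) -
        PowerSeries.constantCoeff f • letterIntegral Letter.x (letterIntegral v g) -
        PowerSeries.constantCoeff g • letterIntegral Letter.x (letterIntegral u f) := by
  apply eulerDerivation_ext
  · have euler_x (h : ℝ⟦X⟧) : eulerDerivation ℝ (letterIntegral Letter.x h) =
        h - PowerSeries.C (PowerSeries.constantCoeff h) := by
      rw [eulerDerivation_letterIntegral, letterSeries, one_mul]
    simp only [Derivation.leibniz, map_sub, map_add, Derivation.map_smul, euler_x]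
    simp only [eulerDerivation_letterIntegral, map_mul, constantCoeff_letterIntegral,
      smul_eq_mul, PowerSeries.smul_eq_C_mul, mul_zero, zero_mul, map_zero, sub_zero]
    ring
  · simp [PowerSeries.smul_eq_C_mul]

/-- The action of `H` on power series in which each letter acts by its integration operator. -/
noncomputable def integralAction : H →ₐ[ℚ] Module.End ℝ ℝ⟦X⟧ :=
  MonoidAlgebra.lift ℚ (Module.End ℝ ℝ⟦X⟧) (FreeMonoid Letter) (FreeMonoid.lift letterIntegral)

/-- The generating series `∑ c_w(m) t^m` of a word `w`, extended `ℚ`-linearly to `H`, where for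
`w = z_{k₁} ⋯ z_{kₙ}` the coefficient `c_w(m)` is the part of the series `ζ̄(k₁,…,kₙ)` with
`m₁ = m`. It is a non-strict multiple polylogarithm. -/
noncomputable def polylog : H →ₗ[ℚ] ℝ⟦X⟧ where
  toFun h := integralAction h 1
  map_add' g h := by simp
  map_smul' c h := by simp

theorem polylog_one : polylog 1 = 1 := by simp [polylog]

theorem polylog_letter_mul (u : Letter) (h : H) :
    polylog (word (FreeMonoid.of u) * h) = letterIntegral u (polylog h) := by
  simp [polylog, integralAction, word]

theorem word_mul_word (v w : FreeMonoid Letter) : word v * word w = word (v * w) := by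
  simp [word, MonoidAlgebra.single_mul_single]

theorem word_ofList_nil : word (FreeMonoid.ofList []) = 1 := rfl

theorem word_ofList_cons (u : Letter) (w : List Letter) :
    word (FreeMonoid.ofList (u :: w)) = word (FreeMonoid.of u) * word (FreeMonoid.ofList w) := by
  rw [word_mul_word, FreeMonoid.ofList_cons]

theorem polylog_word_cons (u : Letter) (w : List Letter) :
    polylog (word (FreeMonoid.ofList (u :: w))) =
      letterIntegral u (polylog (word (FreeMonoid.ofList w))) := by
  rw [word_ofList_cons, polylog_letter_mul]

theorem constantCoeff_polylog_word (w : List Letter) :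
    PowerSeries.constantCoeff (polylog (word (FreeMonoid.ofList w))) = δ w := by
  cases w with
  | nil => rw [word_ofList_nil, polylog_one, map_one, δ, Rat.cast_one]
  | cons u w => rw [polylog_word_cons, constantCoeff_letterIntegral, δ, Rat.cast_zero]

/-- A word lies in `H¹`: it is empty or its last letter is `y`. -/
def IsH1Word (w : List Letter) : Prop := ∀ u ∈ w.getLast?, u = Letter.y

theorem IsH1Word.tail {u : Letter} {w : List Letter} (h : IsH1Word (u :: w)) : IsH1Word w := by
  cases w with
  | nil => simp [IsH1Word]
  | cons v w => simpa [IsH1Word] using h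

theorem IsH1Word.cons {w : List Letter} (h : IsH1Word w) (hw : w ≠ []) (u : Letter) :
    IsH1Word (u :: w) := by
  cases w with
  | nil => contradiction
  | cons v w => simpa [IsH1Word] using h

/-- If `δ(w) ≠ 0`, then the word `uw` of `H¹` is `y`, and `τ(y) = x`. -/
theorem IsH1Word.polylog_delta_smul {u : Letter} {w : List Letter} (h : IsH1Word (u :: w))
    (v : List Letter) :
    polylog (δ w • word (FreeMonoid.ofList (τ u :: v))) =
      (δ w : ℝ) • letterIntegral Letter.x (polylog (word (FreeMonoid.ofList v))) := by
  cases w with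
  | nil =>
    obtain rfl : u = Letter.y := h u rfl
    rw [δ, τ, one_smul, Rat.cast_one, one_smul, polylog_word_cons]
  | cons u' w => simp [δ]

theorem polylog_nshW {v w : List Letter} (hv : IsH1Word v) (hw : IsH1Word w) :
    polylog (nshW v w) =
      polylog (word (FreeMonoid.ofList v)) * polylog (word (FreeMonoid.ofList w)) := by
  induction v, w using nshW.induct with
  | case1 w => rw [nshW, word_ofList_nil, polylog_one, one_mul]
  | case2 u v => rw [nshW, word_ofList_nil, polylog_one, mul_one]
  | case3 u v u' w ih ih' =>
    rw [polylog_word_cons u v, polylog_word_cons u' w, letterIntegral_mul_letterIntegral, nshW,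
      map_sub, map_sub, map_add, polylog_letter_mul, polylog_letter_mul, ih hv.tail hw,
      ih' hv hw.tail, hv.polylog_delta_smul, hw.polylog_delta_smul,
      constantCoeff_polylog_word, constantCoeff_polylog_word, polylog_word_cons u v,
      polylog_word_cons u' w]

/-! ### The n-harmonic product -/

theorem z_one : z 1 = Y := rfl

theorem z_succ {k : ℕ} (hk : 1 ≤ k) : z (k + 1) = X * z k := by
  obtain ⟨k, rfl⟩ := Nat.exists_eq_add_of_le' hk
  rw [z, z, X, word_mul_word]
  rfl

theorem word_zListW_cons (k : ℕ) (ks : List ℕ) :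
    word (zListW (k :: ks)) = z k * word (zListW ks) := by
  rw [z, word_mul_word, zListW, List.flatMap_cons, FreeMonoid.ofList_append]
  rfl

theorem word_zListW_nil : word (zListW []) = 1 := rfl

theorem coeff_polylog_z_mul {k : ℕ} (hk : 1 ≤ k) (h : H) (m : ℕ) :
    PowerSeries.coeff m (polylog (z k * h)) = ((m : ℝ) ^ k)⁻¹ * coeffSum (polylog h) m := by
  induction k, hk using Nat.le_induction with
  | base => rw [z_one, Y, polylog_letter_mul, coeff_letterIntegral_y, pow_one, div_eq_inv_mul]
  | succ k hk ih =>
    rw [z_succ hk, mul_assoc, X, polylog_letter_mul, coeff_letterIntegral_x, ih, pow_succ, mul_inv]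
    ring

theorem coeffSum_polylog_nharmW {ks ls : List ℕ} (hks : ∀ k ∈ ks, 1 ≤ k) (hls : ∀ l ∈ ls, 1 ≤ l)
    (N : ℕ) :
    coeffSum (polylog (nharmW ks ls)) N =
      coeffSum (polylog (word (zListW ks))) N * coeffSum (polylog (word (zListW ls))) N := by
  induction ks, ls using nharmW.induct generalizing N with
  | case1 ls => rw [nharmW, word_zListW_nil, polylog_one, coeffSum_one, one_mul]
  | case2 k ks => rw [nharmW, word_zListW_nil, polylog_one, coeffSum_one, mul_one]
  | case3 k ks l ls ih_left ih_right ih_both =>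
    obtain ⟨hk, hks'⟩ := List.forall_mem_cons.1 hks
    obtain ⟨hl, hls'⟩ := List.forall_mem_cons.1 hls
    rw [coeffSum_mul_coeffSum, coeffSum]
    refine Finset.sum_congr rfl fun m _ => ?_
    rw [nharmW, map_sub, map_add, map_sub, map_add, coeff_polylog_z_mul hk,
      coeff_polylog_z_mul hl, coeff_polylog_z_mul (Nat.le_add_right_of_le hk),
      ih_left hks' hls, ih_right hks hls', ih_both hks' hls', word_zListW_cons k,
      word_zListW_cons l, coeff_polylog_z_mul hk, coeff_polylog_z_mul hl, pow_add, mul_inv]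
    ring

/-! ### The subspaces `H¹` and `H⁰` -/

/-- The left ideal `Hy`, as a `ℚ`-submodule of `H`. -/
noncomputable def Hy : Submodule ℚ H := LinearMap.range (LinearMap.mulRight ℚ Y)

theorem mul_mem_Hy (g : H) {h : H} (hh : h ∈ Hy) : g * h ∈ Hy := by
  obtain ⟨f, rfl⟩ := hh
  exact ⟨g * f, mul_assoc g f Y⟩

theorem Hy_le_H1 : Hy ≤ H1 := le_sup_left

theorem one_mem_H1 : 1 ∈ H1 := Submodule.mem_sup_right (Submodule.mem_span_singleton_self 1)

theorem one_mem_H0 : 1 ∈ H0 := Submodule.mem_sup_right (Submodule.mem_span_singleton_self 1)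

theorem X_mul_mem_H0 {h : H} (hh : h ∈ Hy) : X * h ∈ H0 := by
  obtain ⟨f, rfl⟩ := hh
  exact Submodule.mem_sup_left ⟨f, mul_assoc X f Y⟩

theorem z_mem_Hy (k : ℕ) : z k ∈ Hy :=
  ⟨word (FreeMonoid.ofList (List.replicate (k - 1) Letter.x)), word_mul_word _ _⟩

theorem z_mul_mem_Hy (k : ℕ) {h : H} (hh : h ∈ H1) : z k * h ∈ Hy := by
  obtain ⟨g, hg, c, hc, rfl⟩ := Submodule.mem_sup.1 hh
  obtain ⟨r, rfl⟩ := Submodule.mem_span_singleton.1 hc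
  rw [mul_add, mul_smul_comm, mul_one]
  exact add_mem (mul_mem_Hy _ hg) (Submodule.smul_mem _ r (z_mem_Hy k))

theorem z_mul_mem_H0 {k : ℕ} (hk : 2 ≤ k) {h : H} (hh : h ∈ H1) : z k * h ∈ H0 := by
  obtain ⟨k, rfl⟩ := Nat.exists_eq_add_of_le' hk
  rw [z_succ (Nat.le_add_left 1 k), mul_assoc]
  exact X_mul_mem_H0 (z_mul_mem_Hy _ hh)

theorem word_zListW_mem_H1 (ks : List ℕ) : word (zListW ks) ∈ H1 := by
  induction ks with
  | nil => exact one_mem_H1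
  | cons k ks ih => rw [word_zListW_cons]; exact Hy_le_H1 (z_mul_mem_Hy k ih)

theorem word_zListW_mem_H0 {ks : List ℕ} (hks : ∀ k ∈ ks.head?, 2 ≤ k) :
    word (zListW ks) ∈ H0 := by
  cases ks with
  | nil => exact one_mem_H0
  | cons k ks => rw [word_zListW_cons]; exact z_mul_mem_H0 (hks k rfl) (word_zListW_mem_H1 ks)

theorem nharmW_mem_H1 (ks ls : List ℕ) : nharmW ks ls ∈ H1 := by
  induction ks, ls using nharmW.induct with
  | case1 ls => rw [nharmW]; exact word_zListW_mem_H1 ls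
  | case2 k ks => rw [nharmW]; exact word_zListW_mem_H1 (k :: ks)
  | case3 k ks l ls ih_left ih_right ih_both =>
    rw [nharmW]
    exact Hy_le_H1 (sub_mem (add_mem (z_mul_mem_Hy _ ih_left) (z_mul_mem_Hy _ ih_right))
      (z_mul_mem_Hy _ ih_both))

theorem nharmW_mem_H0 {ks ls : List ℕ} (hks : ∀ k ∈ ks.head?, 2 ≤ k)
    (hls : ∀ l ∈ ls.head?, 2 ≤ l) : nharmW ks ls ∈ H0 := by
  cases ks with
  | nil => rw [nharmW]; exact word_zListW_mem_H0 hls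
  | cons k ks =>
    cases ls with
    | nil => rw [nharmW]; exact word_zListW_mem_H0 hks
    | cons l ls =>
      have hk : 2 ≤ k := hks k rfl
      rw [nharmW]
      exact sub_mem (add_mem (z_mul_mem_H0 hk (nharmW_mem_H1 _ _))
        (z_mul_mem_H0 (hls l rfl) (nharmW_mem_H1 _ _)))
        (z_mul_mem_H0 (Nat.le_add_right_of_le hk) (nharmW_mem_H1 _ _))

theorem IsH1Word.word_mem_Hy {w : List Letter} (h : IsH1Word w) (hw : w ≠ []) :
    word (FreeMonoid.ofList w) ∈ Hy := by
  obtain rfl | ⟨v, u, rfl⟩ := w.eq_nil_or_concat'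
  · contradiction
  · obtain rfl : u = Letter.y := h u (by simp)
    exact ⟨word (FreeMonoid.ofList v), word_mul_word _ _⟩

theorem nshW_mem_Hy {v w : List Letter} (hv : IsH1Word v) (hw : IsH1Word w)
    (hvw : v ≠ [] ∨ w ≠ []) : nshW v w ∈ Hy := by
  induction v, w using nshW.induct with
  | case1 w => rw [nshW]; exact hw.word_mem_Hy (hvw.resolve_left (not_not_intro rfl))
  | case2 u v => rw [nshW]; exact hv.word_mem_Hy (List.cons_ne_nil u v)
  | case3 u v u' w ih_left ih_right =>
    have left_mem := ih_left hv.tail hw (.inr (List.cons_ne_nil u' w))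
    have right_mem := ih_right hv hw.tail (.inl (List.cons_ne_nil u v))
    have correction_mem {t : List Letter} (ht : IsH1Word t) (ht' : t ≠ []) (c : ℚ) (a : Letter) :
        c • word (FreeMonoid.ofList (a :: t)) ∈ Hy :=
      Submodule.smul_mem _ c ((ht.cons ht' a).word_mem_Hy (List.cons_ne_nil a t))
    rw [nshW]
    exact sub_mem (sub_mem (add_mem (mul_mem_Hy _ left_mem) (mul_mem_Hy _ right_mem))
      (correction_mem hw (List.cons_ne_nil u' w) _ _))
      (correction_mem hv (List.cons_ne_nil u v) _ _)

/-- A word lies in `H⁰`: it is empty, or its first letter is `x` and its last letter is `y`. -/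
def IsH0Word (w : List Letter) : Prop := IsH1Word w ∧ ∀ u ∈ w.head?, u = Letter.x

theorem IsH0Word.eq_nil_or_exists_eq_x_cons {w : List Letter} (h : IsH0Word w) :
    w = [] ∨ ∃ v, v ≠ [] ∧ w = Letter.x :: v := by
  cases w with
  | nil => exact .inl rfl
  | cons u v =>
    obtain rfl : u = Letter.x := h.2 u rfl
    refine .inr ⟨v, ?_, rfl⟩
    rintro rfl
    exact Letter.noConfusion (h.1 Letter.x rfl)

theorem IsH0Word.word_mem_H0 {w : List Letter} (h : IsH0Word w) :
    word (FreeMonoid.ofList w) ∈ H0 := by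
  obtain rfl | ⟨v, hv, rfl⟩ := h.eq_nil_or_exists_eq_x_cons
  · exact one_mem_H0
  · rw [word_ofList_cons]
    exact X_mul_mem_H0 (h.1.tail.word_mem_Hy hv)

theorem nshW_mem_H0 {v w : List Letter} (hv : IsH0Word v) (hw : IsH0Word w) :
    nshW v w ∈ H0 := by
  obtain rfl | ⟨v', hv', rfl⟩ := hv.eq_nil_or_exists_eq_x_cons
  · rw [nshW]; exact hw.word_mem_H0
  obtain rfl | ⟨w', hw', rfl⟩ := hw.eq_nil_or_exists_eq_x_cons
  · rw [nshW]; exact hv.word_mem_H0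
  have delta_eq_zero {t : List Letter} (ht : t ≠ []) : δ t = 0 := by
    cases t with
    | nil => contradiction
    | cons u t => rfl
  rw [nshW, delta_eq_zero hv', delta_eq_zero hw', zero_smul, zero_smul, sub_zero, sub_zero]
  exact add_mem (X_mul_mem_H0 (nshW_mem_Hy hv.1.tail hw.1 (.inl hv')))
    (X_mul_mem_H0 (nshW_mem_Hy hv.1 hw.1.tail (.inr hw')))

theorem isH0Word_of_mem_support {h : H} (hh : h ∈ H0) {w : FreeMonoid Letter}
    (hw : w ∈ h.coeff.support) : IsH0Word w.toList := by
  obtain ⟨_, ⟨g, rfl⟩, c, hc, rfl⟩ := Submodule.mem_sup.1 hh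
  obtain ⟨r, rfl⟩ := Submodule.mem_span_singleton.1 hc
  by_contra hw_not
  have coeff_one : (1 : H).coeff w = 0 := by
    refine Finsupp.single_eq_of_ne ?_
    rintro rfl
    exact hw_not (by simp [IsH0Word, IsH1Word])
  have coeff_xgy : (X * g * Y).coeff w = 0 := by
    rw [Y, word]
    by_cases hy : ∃ d, d * FreeMonoid.of Letter.y = w
    · obtain ⟨d, rfl⟩ := hy
      rw [MonoidAlgebra.coeff_mul_single_mul, X, word,
        MonoidAlgebra.coeff_single_mul_of_forall_mul_ne, zero_mul]
      rintro e rfl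
      exact hw_not (by simp [IsH0Word, IsH1Word, List.getLast?_cons])
    · exact MonoidAlgebra.coeff_mul_single_of_forall_mul_ne _ _ (not_exists.1 hy)
  refine Finsupp.mem_support_iff.1 hw ?_
  change (X * g * Y).coeff w + r • (1 : H).coeff w = 0
  rw [coeff_xgy, coeff_one, smul_zero, add_zero]

theorem zListW_toZAux_concat_y (w : List Letter) (n : ℕ) :
    zListW (toZAux (w ++ [Letter.y]) n) =
      FreeMonoid.ofList (List.replicate n Letter.x ++ (w ++ [Letter.y])) := by
  induction w generalizing n with
  | nil => simp [zListW, toZAux]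
  | cons u w ih =>
    cases u with
    | x => simpa [toZAux, List.replicate_succ'] using ih (n + 1)
    | y =>
      have h : zListW (toZAux (Letter.y :: w ++ [Letter.y]) n) =
          zW (n + 1) * zListW (toZAux (w ++ [Letter.y]) 0) := rfl
      rw [h, ih]
      simp [zW, ← FreeMonoid.ofList_append]

theorem IsH1Word.zListW_toZ {w : FreeMonoid Letter} (hw : IsH1Word w.toList) :
    zListW (toZ w) = w := by
  obtain hnil | ⟨v, u, hv⟩ := w.toList.eq_nil_or_concat'
  · rw [toZ, hnil]
    exact hnil.symm
  · obtain rfl : u = Letter.y := hw u (by simp [hv])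
    rw [toZ, hv, zListW_toZAux_concat_y]
    exact hv.symm

theorem one_le_of_mem_toZAux {w : List Letter} {n k : ℕ} (hk : k ∈ toZAux w n) : 1 ≤ k := by
  induction w generalizing n with
  | nil => simp [toZAux] at hk
  | cons u w ih =>
    cases u with
    | x => exact ih hk
    | y =>
      obtain rfl | hk := List.mem_cons.1 hk
      · exact Nat.le_add_left 1 n
      · exact ih hk

theorem one_le_of_mem_toZ {w : FreeMonoid Letter} {k : ℕ} (hk : k ∈ toZ w) : 1 ≤ k :=
  one_le_of_mem_toZAux hk

theorem lt_of_mem_head?_toZAux {w : List Letter} {n k : ℕ} (hk : k ∈ (toZAux w n).head?) :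
    n < k := by
  induction w generalizing n with
  | nil => simp [toZAux] at hk
  | cons u w ih =>
    cases u with
    | x => exact n.lt_succ_self.trans (ih hk)
    | y =>
      obtain rfl : n + 1 = k := by simpa [toZAux] using hk
      exact n.lt_succ_self

theorem IsH0Word.two_le_of_mem_head?_toZ {w : FreeMonoid Letter} (hw : IsH0Word w.toList) {k : ℕ}
    (hk : k ∈ (toZ w).head?) : 2 ≤ k := by
  rw [toZ] at hk
  obtain hnil | ⟨v, -, hv⟩ := hw.eq_nil_or_exists_eq_x_cons
  · simp [hnil, toZAux] at hk
  · rw [hv] at hk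
    exact lt_of_mem_head?_toZAux (n := 1) hk

/-! ### Convergence on `H⁰` -/

section NonnegativeCoefficients

variable {f : ℝ⟦X⟧}

theorem coeff_letterIntegral_nonneg (hf : ∀ m, 0 ≤ PowerSeries.coeff m f) (u : Letter) (m : ℕ) :
    0 ≤ PowerSeries.coeff m (letterIntegral u f) := by
  cases u with
  | x => rw [coeff_letterIntegral_x]; exact div_nonneg (hf m) m.cast_nonneg
  | y => rw [coeff_letterIntegral_y]; exact div_nonneg (coeffSum_nonneg hf m) m.cast_nonneg

theorem coeff_letterIntegral_le (hf : ∀ m, 0 ≤ PowerSeries.coeff m f) (u : Letter) (m : ℕ) :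
    PowerSeries.coeff m (letterIntegral u f) ≤ coeffSum f m / m := by
  cases u with
  | x => rw [coeff_letterIntegral_x]; gcongr; exact coeff_le_coeffSum hf m
  | y => rw [coeff_letterIntegral_y]

theorem coeffSum_letterIntegral_le (hf : ∀ m, 0 ≤ PowerSeries.coeff m f) (u : Letter) (N : ℕ) :
    coeffSum (letterIntegral u f) N ≤ coeffSum f N * harmonic N := by
  calc coeffSum (letterIntegral u f) N
      ≤ ∑ m ∈ Finset.range (N + 1), coeffSum f N * (m : ℝ)⁻¹ := by
        refine Finset.sum_le_sum fun m hm => (coeff_letterIntegral_le hf u m).trans ?_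
        rw [div_eq_mul_inv]
        gcongr
        exact coeffSum_monotone hf (Finset.mem_range_succ_iff.1 hm)
    _ = coeffSum f N * harmonic N := by
        rw [← Finset.mul_sum, Finset.sum_range_succ']
        simp [harmonic]

theorem coeff_polylog_word_nonneg (w : List Letter) (m : ℕ) :
    0 ≤ PowerSeries.coeff m (polylog (word (FreeMonoid.ofList w))) := by
  induction w generalizing m with
  | nil => rw [word_ofList_nil, polylog_one, PowerSeries.coeff_one]; positivity
  | cons u w ih => rw [polylog_word_cons]; exact coeff_letterIntegral_nonneg ih u m

theorem coeffSum_polylog_word_le (w : List Letter) (N : ℕ) :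
    coeffSum (polylog (word (FreeMonoid.ofList w))) N ≤ (harmonic N : ℝ) ^ w.length := by
  induction w with
  | nil => rw [word_ofList_nil, polylog_one, coeffSum_one, List.length_nil, pow_zero]
  | cons u w ih =>
    have harmonic_nonneg : (0 : ℝ) ≤ harmonic N := by
      rw [harmonic]
      positivity
    rw [polylog_word_cons, List.length_cons, pow_succ]
    exact (coeffSum_letterIntegral_le (coeff_polylog_word_nonneg w) u N).trans (by gcongr)

end NonnegativeCoefficients

theorem IsH0Word.summable_coeff_polylog {w : List Letter} (hw : IsH0Word w) :
    Summable fun m => PowerSeries.coeff m (polylog (word (FreeMonoid.ofList w))) := by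
  obtain rfl | ⟨v, hv, rfl⟩ := hw.eq_nil_or_exists_eq_x_cons
  · rw [word_ofList_nil, polylog_one]
    exact summable_of_ne_finset_zero (s := {0}) fun m hm => by simp_all [PowerSeries.coeff_one]
  · obtain ⟨u, v, rfl⟩ := List.exists_cons_of_ne_nil hv
    refine (summable_harmonic_pow_div_sq v.length).of_nonneg_of_le
      (coeff_polylog_word_nonneg _) fun m => ?_
    rw [polylog_word_cons, coeff_letterIntegral_x, polylog_word_cons, pow_two, ← div_div]
    gcongr
    refine (coeff_letterIntegral_le (coeff_polylog_word_nonneg v) u m).trans ?_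
    gcongr
    exact coeffSum_polylog_word_le v m

theorem coeffSum_polylog_zListW {ks : List ℕ} (hks : ∀ k ∈ ks, 1 ≤ k) (N : ℕ) :
    coeffSum (polylog (word (zListW ks))) N =
      ∑ f ∈ antitoneTuples ks.length N, ∏ i, ((f i : ℝ) ^ ks.get i)⁻¹ := by
  induction ks generalizing N with
  | nil =>
    rw [word_zListW_nil, polylog_one, coeffSum_one]
    simp [antitoneTuples]
  | cons k ks ih =>
    obtain ⟨hk, hks⟩ := List.forall_mem_cons.1 hks
    have zero_term : (((0 : ℕ) : ℝ) ^ k)⁻¹ = 0 := by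
      rw [Nat.cast_zero, zero_pow (Nat.one_le_iff_ne_zero.1 hk), inv_zero]
    rw [word_zListW_cons, coeffSum]
    simp only [coeff_polylog_z_mul hk]
    rw [Finset.range_eq_Ico, Finset.sum_eq_sum_Ico_succ_bot N.succ_pos, zero_term, zero_mul,
      zero_add]
    refine (Finset.sum_congr rfl fun m _ => ?_).trans (sum_antitoneTuples_succ _ _ _).symm
    rw [ih hks, Finset.mul_sum]
    simp [Fin.prod_univ_succ, mul_comm]

theorem nmzeta_eq_of_tendsto {ks : List ℕ} {S : ℝ}
    (hS : Tendsto (fun N => ∑ f ∈ antitoneTuples ks.length N, ∏ i, ((f i : ℝ) ^ ks.get i)⁻¹)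
      atTop (𝓝 S)) : nmzeta ks = S := by
  refine (hasSum_of_tendsto_sum_of_monotone
    (s := fun N => (antitoneTuples ks.length N).subtype _) ?_ ?_ ?_ ?_).tsum_eq
  · intro f
    positivity
  · intro M N hMN f hf
    rw [Finset.mem_subtype, mem_antitoneTuples] at hf ⊢
    exact ⟨hf.1, fun i => (hf.2 i).trans hMN⟩
  · intro f
    refine ⟨∑ i, f.1 i, Finset.mem_subtype.2 (mem_antitoneTuples.2 ⟨f.2, fun i => ?_⟩)⟩
    exact Finset.single_le_sum (fun _ _ => Nat.zero_le _) (Finset.mem_univ i)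
  · refine hS.congr fun N => (Finset.sum_subtype_of_mem _ fun f hf => ?_).symm
    exact (mem_antitoneTuples.1 hf).1

theorem IsH0Word.hasSum_coeff_polylog {w : FreeMonoid Letter} (hw : IsH0Word w.toList) :
    HasSum (fun m => PowerSeries.coeff m (polylog (word w))) (nmzeta (toZ w)) := by
  have hsum := hw.summable_coeff_polylog.hasSum
  rw [FreeMonoid.ofList_toList] at hsum
  have htrunc := tendsto_coeffSum hsum
  rw [← hw.1.zListW_toZ] at htrunc
  rw [nmzeta_eq_of_tendsto (htrunc.congr (coeffSum_polylog_zListW fun _ => one_le_of_mem_toZ)),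
    hw.1.zListW_toZ]
  exact hsum

/-! ### Multiplicativity of `Z̄` -/

/-- `Z̄` as a `ℚ`-linear map on all of `H`. -/
noncomputable def ZbarLinear : H →ₗ[ℚ] ℝ where
  toFun := Zbar
  map_add' a b := Finsupp.sum_add_index' (by simp) (by simp [add_mul])
  map_smul' c a := by
    simp [Zbar, Finsupp.sum_smul_index, Finsupp.mul_sum, Rat.smul_def, mul_assoc]

theorem ZbarLinear_apply (a : H) : ZbarLinear a = Zbar a := rfl

theorem Zbar_word (w : FreeMonoid Letter) : Zbar (word w) = nmzeta (toZ w) := by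
  simp [Zbar, word]

theorem sum_coeff_smul_word (h : H) : (h.coeff.sum fun w c => c • word w) = h := by
  simp [word]

theorem hasSum_coeff_polylog {h : H} (hh : h ∈ H0) :
    HasSum (fun m => PowerSeries.coeff m (polylog h)) (Zbar h) := by
  have coeff_polylog (m : ℕ) : PowerSeries.coeff m (polylog h) =
      ∑ w ∈ h.coeff.support, (h.coeff w : ℝ) * PowerSeries.coeff m (polylog (word w)) := by
    conv_lhs => rw [← sum_coeff_smul_word h]
    simp [Finsupp.sum, Rat.smul_def]
  simp only [coeff_polylog]
  exact hasSum_sum fun w hw => (isH0Word_of_mem_support hh hw).hasSum_coeff_polylog.mul_left _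

theorem Zbar_nshW {v w : FreeMonoid Letter} (hv : IsH0Word v.toList) (hw : IsH0Word w.toList) :
    Zbar (nshW v.toList w.toList) = Zbar (word v) * Zbar (word w) := by
  refine (hasSum_coeff_polylog (nshW_mem_H0 hv hw)).unique ?_
  rw [polylog_nshW hv.1 hw.1, Zbar_word, Zbar_word]
  exact hasSum_coeff_mul hv.hasSum_coeff_polylog hw.hasSum_coeff_polylog

theorem Zbar_nharmW {v w : FreeMonoid Letter} (hv : IsH0Word v.toList) (hw : IsH0Word w.toList) :
    Zbar (nharmW (toZ v) (toZ w)) = Zbar (word v) * Zbar (word w) := by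
  have product_mem : nharmW (toZ v) (toZ w) ∈ H0 :=
    nharmW_mem_H0 (fun _ => hv.two_le_of_mem_head?_toZ) (fun _ => hw.two_le_of_mem_head?_toZ)
  refine tendsto_nhds_unique (tendsto_coeffSum (hasSum_coeff_polylog product_mem)) ?_
  rw [Zbar_word, Zbar_word]
  refine ((tendsto_coeffSum hv.hasSum_coeff_polylog).mul
    (tendsto_coeffSum hw.hasSum_coeff_polylog)).congr fun N => ?_
  rw [coeffSum_polylog_nharmW (fun _ => one_le_of_mem_toZ) (fun _ => one_le_of_mem_toZ),
    hv.1.zListW_toZ, hw.1.zListW_toZ]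

theorem Zbar_sum_sum_smul {P : FreeMonoid Letter → FreeMonoid Letter → H}
    (hP : ∀ {v w}, IsH0Word v.toList → IsH0Word w.toList →
      Zbar (P v w) = Zbar (word v) * Zbar (word w))
    {a b : H} (ha : a ∈ H0) (hb : b ∈ H0) :
    Zbar (a.coeff.sum fun v c => b.coeff.sum fun w d => (c * d) • P v w) = Zbar a * Zbar b := by
  rw [← ZbarLinear_apply, Zbar, Zbar, Finsupp.sum, Finsupp.sum, Finsupp.sum, Finset.sum_mul_sum,
    map_sum]
  refine Finset.sum_congr rfl fun v hv => ?_
  rw [Finsupp.sum, map_sum]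
  refine Finset.sum_congr rfl fun w hw => ?_
  rw [map_smul, ZbarLinear_apply, hP (isH0Word_of_mem_support ha hv)
    (isH0Word_of_mem_support hb hw), Zbar_word, Zbar_word, Rat.smul_def]
  push_cast
  ring

theorem Zbar_nharm {a b : H} (ha : a ∈ H0) (hb : b ∈ H0) : Zbar (nharm a b) = Zbar a * Zbar b :=
  Zbar_sum_sum_smul Zbar_nharmW ha hb

theorem Zbar_nsh {a b : H} (ha : a ∈ H0) (hb : b ∈ H0) : Zbar (nsh a b) = Zbar a * Zbar b :=
  Zbar_sum_sum_smul Zbar_nshW ha hb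

theorem Zbar_sub (a b : H) : Zbar (a - b) = Zbar a - Zbar b := map_sub ZbarLinear a b

end H

/-- Finite double shuffle relations for non-strict multiple zeta values:
`Z̄(w₁ *̄ w₂ − w₁ ш̄ w₂) = 0` for all `w₁, w₂ ∈ H⁰`. -/
theorem finite_double_shuffle :
    ∀ w1 ∈ H0, ∀ w2 ∈ H0, Zbar (nharm w1 w2 - nsh w1 w2) = 0 := by
  intro w1 hw1 w2 hw2
  rw [Zbar_sub, Zbar_nharm hw1 hw2, Zbar_nsh hw1 hw2, sub_self]
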